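/- Let m ≥ 1 be an integer and let N_μ and N_ν be Poisson random variables with means 0 < μ ≤ ν. Then E[min(N_μ, m)]/μ ≥ E[min(N_ν, m)]/ν; that is, the ratio E[min(N_μ, m)]/μ is nonincreasing in the Poisson mean μ > 0. -/

import Mathlib

open MeasureTheory

/-! Write `N_r` for a Poisson variable of mean `r`. If `g 0 = 0`, the Stein–Chen identity
`E[N_r f(N_r)] = r E[f(N_r + 1)]`, applied to `f n = g n / n`, turns the ratio `E[g(N_r)] / r` into
`E[f(N_r + 1)]`. When `g n / n` is nonincreasing, the latter decreases in `r`, because for `r ≤ s`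
the law of `N_s` is the convolution of the laws of `N_r` and `N_{s-r}`: `N_s` is `N_r` plus
something nonnegative. For `g n = min n m` the quotient is `min 1 (m / n)`. -/

section

open ProbabilityTheory
open scoped NNReal Nat

theorem integral_conv_le_of_antitone {M : Type*} [AddMonoid M] [Preorder M]
    [CanonicallyOrderedAdd M] [MeasurableSpace M] [MeasurableAdd₂ M] {μ ν : Measure M}
    [SFinite μ] [IsProbabilityMeasure ν] {f : M → ℝ} (hf : Antitone f) (hμ : Integrable f μ)
    (hconv : Integrable f (μ ∗ ν)) :
    ∫ x, f x ∂(μ ∗ ν) ≤ ∫ x, f x ∂μ := by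
  have hadd : AEMeasurable (fun p : M × M => p.1 + p.2) (μ.prod ν) := by fun_prop
  calc ∫ x, f x ∂(μ ∗ ν)
      = ∫ p, f (p.1 + p.2) ∂(μ.prod ν) := integral_map hadd hconv.aestronglyMeasurable
    _ ≤ ∫ p, f p.1 ∂(μ.prod ν) :=
        integral_mono (hconv.comp_aemeasurable hadd) (hμ.comp_fst ν) fun _ => hf le_self_add
    _ = ∫ x, f x ∂μ := by simp [integral_fun_fst]

theorem succ_mul_poissonMeasure_real_singleton_succ (r : ℝ≥0) (n : ℕ) :
    ((n + 1 : ℕ) : ℝ) * (poissonMeasure r).real {n + 1} = r * (poissonMeasure r).real {n} := by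
  simp only [poissonMeasure_real_singleton, Nat.factorial_succ]
  push_cast
  field_simp
  ring

theorem integrable_poissonMeasure_of_le {E : Type*} [NormedAddCommGroup E] {f : ℕ → E} {r s : ℝ≥0}
    (hrs : r ≤ s) (hf : Integrable f (poissonMeasure s)) : Integrable f (poissonMeasure r) := by
  rw [integrable_poissonMeasure_iff] at hf ⊢
  refine .of_nonneg_of_le (fun _ => by positivity) (fun n => ?_)
    (hf.mul_left (Real.exp (s - r)))
  have hexp : Real.exp (-r) = Real.exp (s - r) * Real.exp (-s) := by
    rw [← Real.exp_add]
    ring_nf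
  calc Real.exp (-r) * r ^ n / n ! * ‖f n‖
      ≤ Real.exp (-r) * s ^ n / n ! * ‖f n‖ := by gcongr
    _ = Real.exp (s - r) * (Real.exp (-s) * s ^ n / n ! * ‖f n‖) := by
        rw [hexp]
        ring

theorem integral_poissonMeasure_le_of_antitone {f : ℕ → ℝ} {r s : ℝ≥0} (hf : Antitone f)
    (hrs : r ≤ s) (hint : Integrable f (poissonMeasure s)) :
    ∫ n, f n ∂poissonMeasure s ≤ ∫ n, f n ∂poissonMeasure r := by
  have hconv : poissonMeasure r ∗ poissonMeasure (s - r) = poissonMeasure s := by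
    rw [poissonMeasure_conv_poissonMeasure, add_tsub_cancel_of_le hrs]
  have hle := integral_conv_le_of_antitone hf (integrable_poissonMeasure_of_le hrs hint)
    (hconv.symm ▸ hint)
  rwa [hconv] at hle

section SteinChen

variable {E : Type*} [NormedAddCommGroup E] [NormedSpace ℝ E]

theorem integrable_natCast_smul_poissonMeasure_iff {r : ℝ≥0} (hr : r ≠ 0) {f : ℕ → E} :
    Integrable (fun n : ℕ => (n : ℝ) • f n) (poissonMeasure r) ↔
      Integrable (fun n => f (n + 1)) (poissonMeasure r) := by
  simp only [integrable_poissonMeasure_iff, ← poissonMeasure_real_singleton]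
  have hterm (n : ℕ) : (poissonMeasure r).real {n + 1} * ‖((n + 1 : ℕ) : ℝ) • f (n + 1)‖ =
      r * ((poissonMeasure r).real {n} * ‖f (n + 1)‖) := by
    rw [norm_smul, Real.norm_natCast, mul_left_comm, ← mul_assoc,
      succ_mul_poissonMeasure_real_singleton_succ, mul_assoc]
  rw [← summable_nat_add_iff 1]
  simp only [hterm]
  exact summable_mul_left_iff (NNReal.coe_ne_zero.mpr hr)

theorem integral_natCast_smul_poissonMeasure [FiniteDimensional ℝ E] (r : ℝ≥0) (f : ℕ → E) :
    ∫ n : ℕ, (n : ℝ) • f n ∂poissonMeasure r = (r : ℝ) • ∫ n, f (n + 1) ∂poissonMeasure r := by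
  simp only [integral_poissonMeasure, ← poissonMeasure_real_singleton]
  have hsupp : Function.support (fun n : ℕ => (poissonMeasure r).real {n} • (n : ℝ) • f n) ⊆
      Set.range Nat.succ := by
    rintro (_ | n) hn
    · simp at hn
    · exact ⟨n, rfl⟩
  rw [← Nat.succ_injective.tsum_eq hsupp, ← tsum_const_smul'']
  congr! 2 with n
  rw [smul_smul, smul_smul, mul_comm, Nat.succ_eq_add_one,
    succ_mul_poissonMeasure_real_singleton_succ]

end SteinChen

theorem natCast_mul_div_natCast {K : Type*} [Semifield K] [CharZero K] {g : ℕ → K}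
    (hg0 : g 0 = 0) (n : ℕ) : n * (g n / n) = g n :=
  mul_div_cancel_of_imp' fun hn => by rw [Nat.cast_eq_zero.mp hn, hg0]

theorem integral_poissonMeasure_div {g : ℕ → ℝ} (hg0 : g 0 = 0) {r : ℝ≥0} (hr : r ≠ 0) :
    (∫ n, g n ∂poissonMeasure r) / r = ∫ n, g (n + 1) / (n + 1 : ℕ) ∂poissonMeasure r := by
  have hstein := integral_natCast_smul_poissonMeasure r fun n => g n / n
  simp only [smul_eq_mul, natCast_mul_div_natCast hg0] at hstein
  rw [hstein, mul_div_cancel_left₀ _ (NNReal.coe_ne_zero.mpr hr)]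

theorem integral_poissonMeasure_div_le_of_antitoneOn {g : ℕ → ℝ} {r s : ℝ≥0} (hg0 : g 0 = 0)
    (hg : AntitoneOn (fun n : ℕ => g n / n) (Set.Ici 1)) (hr : 0 < r) (hrs : r ≤ s)
    (hint : Integrable g (poissonMeasure s)) :
    (∫ n, g n ∂poissonMeasure s) / s ≤ (∫ n, g n ∂poissonMeasure r) / r := by
  have hs : s ≠ 0 := (hr.trans_le hrs).ne'
  have hanti : Antitone fun n : ℕ => g (n + 1) / (n + 1 : ℕ) := fun a b hab =>
    hg (by simp) (by simp) (by lia)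
  have hint' : Integrable (fun n : ℕ => g (n + 1) / (n + 1 : ℕ)) (poissonMeasure s) := by
    rw [← integrable_natCast_smul_poissonMeasure_iff hs (f := fun n => g n / n)]
    simpa only [smul_eq_mul, natCast_mul_div_natCast hg0] using hint
  rw [integral_poissonMeasure_div hg0 hs, integral_poissonMeasure_div hg0 hr.ne']
  exact integral_poissonMeasure_le_of_antitone hanti hrs hint'

theorem hasLaw_poissonMeasure_of_forall_singleton {Ω : Type*} [MeasurableSpace Ω] {P : Measure Ω}
    {X : Ω → ℕ} {r : ℝ≥0} (hX : AEMeasurable X P)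
    (h : ∀ i : ℕ, P {ω | X ω = i} = ENNReal.ofReal (Real.exp (-r) * r ^ i / i !)) :
    HasLaw X (poissonMeasure r) P where
  aemeasurable := hX
  map_eq := Measure.ext_of_singleton fun i => by
    rw [Measure.map_apply_of_aemeasurable hX (measurableSet_singleton i),
      poissonMeasure_singleton, ← h i]
    rfl

theorem antitoneOn_min_div (m : ℕ) :
    AntitoneOn (fun n : ℕ => ((min n m : ℕ) : ℝ) / n) (Set.Ici 1) := by
  intro a ha b hb hab
  have ha' : (0 : ℝ) < a := Nat.cast_pos.mpr ha
  have hb' : (0 : ℝ) < b := Nat.cast_pos.mpr hb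
  have hcross : min b m * a ≤ min a m * b := by
    rw [min_mul, min_mul, mul_comm b a]
    gcongr
  rw [div_le_div_iff₀ hb' ha']
  exact_mod_cast hcross

theorem integrable_min_natCast {P : Measure ℕ} [IsFiniteMeasure P] (m : ℕ) :
    Integrable (fun n : ℕ => ((min n m : ℕ) : ℝ)) P :=
  .of_bound .of_discrete m (.of_forall fun n => by
    rw [Real.norm_natCast]
    exact_mod_cast min_le_right n m)

theorem stmt13_general {Ω₁ Ω₂ : Type*} [MeasurableSpace Ω₁] [MeasurableSpace Ω₂]
    {P₁ : Measure Ω₁} {P₂ : Measure Ω₂} {X : Ω₁ → ℕ} {Y : Ω₂ → ℕ} {r s : ℝ≥0}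
    (hX : HasLaw X (poissonMeasure r) P₁) (hY : HasLaw Y (poissonMeasure s) P₂)
    (hr : 0 < r) (hrs : r ≤ s) {g : ℕ → ℝ} (hg0 : g 0 = 0)
    (hg : AntitoneOn (fun n : ℕ => g n / n) (Set.Ici 1)) (hint : Integrable g (poissonMeasure s)) :
    (∫ ω, g (Y ω) ∂P₂) / s ≤ (∫ ω, g (X ω) ∂P₁) / r := by
  have hXint : ∫ ω, g (X ω) ∂P₁ = ∫ n, g n ∂poissonMeasure r := hX.integral_comp .of_discrete
  have hYint : ∫ ω, g (Y ω) ∂P₂ = ∫ n, g n ∂poissonMeasure s := hY.integral_comp .of_discrete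
  rw [hXint, hYint]
  exact integral_poissonMeasure_div_le_of_antitoneOn hg0 hg hr hrs hint

end

/-- Let `m ≥ 1` be an integer and `N_μ`, `N_ν` Poisson random variables with means
`0 < μ ≤ ν`.  Then `E[min(N_μ, m)]/μ ≥ E[min(N_ν, m)]/ν`; that is, the ratio
`E[min(N_μ, m)]/μ` is nonincreasing in the Poisson mean `μ > 0`. -/
theorem stmt13 {Ω₁ Ω₂ : Type*} [MeasurableSpace Ω₁] [MeasurableSpace Ω₂]
    (ℙ₁ : Measure Ω₁) [IsProbabilityMeasure ℙ₁] (ℙ₂ : Measure Ω₂) [IsProbabilityMeasure ℙ₂]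
    (Nμ : Ω₁ → ℕ) (hNμm : Measurable Nμ) (Nν : Ω₂ → ℕ) (hNνm : Measurable Nν)
    (μ ν : ℝ) (hμ0 : 0 < μ) (hμν : μ ≤ ν)
    (hNμ : ∀ i : ℕ, ℙ₁ {ω | Nμ ω = i} = ENNReal.ofReal (Real.exp (-μ) * μ ^ i / (Nat.factorial i)))
    (hNν : ∀ i : ℕ, ℙ₂ {ω | Nν ω = i} = ENNReal.ofReal (Real.exp (-ν) * ν ^ i / (Nat.factorial i)))
    (m : ℕ) (hm : 1 ≤ m) :
    (∫ ω, ((min (Nμ ω) m : ℕ) : ℝ) ∂ℙ₁) / μ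
      ≥ (∫ ω, ((min (Nν ω) m : ℕ) : ℝ) ∂ℙ₂) / ν := by
  lift μ to NNReal using hμ0.le
  lift ν to NNReal using (NNReal.coe_nonneg μ).trans hμν
  exact stmt13_general (hasLaw_poissonMeasure_of_forall_singleton hNμm.aemeasurable hNμ)
    (hasLaw_poissonMeasure_of_forall_singleton hNνm.aemeasurable hNν) hμ0 hμν (by simp)
    (antitoneOn_min_div m) (integrable_min_natCast m)
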